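/- Let G be a finitely generated group with finite generating set S, let H be a geodesic space with Δ-thin triangles, and let ρ_n : G → Isom(H) be a sequence of homomorphisms that blows up. Let K be the complete graph with vertex set G, let x_n be an approximate center of ρ_n, let ι_n : K → H be the ρ_n-equivariant straight map with ι_n(g) = ρ_n(g)x_n on vertices, let d_n = ι_n*d_H, and let λ_n = (max{1, d_n(1_G, s) : s ∈ S})^{-1}. Then there is a subsequence such that the rescaled pseudo-metrics λ_n d_n converge pointwise on K × K to a pseudo-metric d̄, and the metric space associated to (K, d̄) is an ℝ-tree. -/

import Mathlib

open Set Filter Metric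

section Common

variable {H : Type*} [MetricSpace H]

/-- `γ` parametrizes a geodesic from `a` to `b` by arclength on `[0, dist a b]`. -/
def IsGeodesicSegment (γ : ℝ → H) (a b : H) : Prop :=
  γ 0 = a ∧ γ (dist a b) = b ∧
    ∀ s ∈ Set.Icc (0:ℝ) (dist a b), ∀ t ∈ Set.Icc (0:ℝ) (dist a b),
      dist (γ s) (γ t) = |s - t|

/-- A geodesic space: every pair of points is joined by a geodesic. -/
def GeodesicSpace (H : Type*) [MetricSpace H] : Prop :=
  ∀ a b : H, ∃ γ : ℝ → H, IsGeodesicSegment γ a b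

/-- The image of a geodesic segment from `a` to `b`. -/
def segImage (γ : ℝ → H) (a b : H) : Set H :=
  γ '' Set.Icc 0 (dist a b)

/-- A space has `Δ`-thin triangles if each side of every geodesic triangle is contained
in the `Δ`-neighborhood of the union of the other two sides. -/
def ThinTriangles (H : Type*) [MetricSpace H] (Δ : ℝ) : Prop :=
  ∀ a b c : H, ∀ γab γbc γca : ℝ → H,
    IsGeodesicSegment γab a b → IsGeodesicSegment γbc b c → IsGeodesicSegment γca c a →
      ∀ x ∈ segImage γab a b, ∃ y ∈ segImage γbc b c ∪ segImage γca c a, dist x y ≤ Δ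

/-- An arc from `a` to `b`, parametrized (injectively and continuously) by `[0,1]`. -/
def IsArcParam (α : ℝ → H) (a b : H) : Prop :=
  ContinuousOn α (Set.Icc 0 1) ∧ Set.InjOn α (Set.Icc 0 1) ∧ α 0 = a ∧ α 1 = b

/-- An `ℝ`-tree: a metric space in which every pair of points is joined by a geodesic
(so it is a path-metric space and arcs are isometric to intervals of `ℝ`) and in which
the arc joining two points is unique. -/
def IsRTree (X : Type*) [MetricSpace X] : Prop :=
  (∀ a b : X, ∃ γ : ℝ → X, IsGeodesicSegment γ a b) ∧
  ∀ a b : X, ∀ α β : ℝ → X, IsArcParam α a b → IsArcParam β a b →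
    α '' Set.Icc 0 1 = β '' Set.Icc 0 1

/-- The translation length of an isometry. -/
noncomputable def translationLength {X : Type*} [MetricSpace X] (τ : X ≃ᵢ X) : ℝ :=
  ⨅ x : X, dist x (τ x)

/-- The core of an isometry of an `ℝ`-tree: points moved the minimal distance. -/
def isomCore {X : Type*} [MetricSpace X] (τ : X ≃ᵢ X) : Set X :=
  {x : X | dist x (τ x) = translationLength τ}

/-- An elliptic isometry: one having a fixed point. -/
def IsElliptic {X : Type*} [MetricSpace X] (τ : X ≃ᵢ X) : Prop :=
  ∃ x, τ x = x

/-- A hyperbolic isometry of an `ℝ`-tree: positive translation length, with core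
isometric to the real line (its axis). -/
def IsHyperbolicIsom {X : Type*} [MetricSpace X] (τ : X ≃ᵢ X) : Prop :=
  0 < translationLength τ ∧
    ∃ e : ℝ → X, (∀ s t : ℝ, dist (e s) (e t) = |s - t|) ∧ Set.range e = isomCore τ

/-- A metric simplicial tree: an `ℝ`-tree together with a closed discrete set `V` of
vertices such that each connected component of the complement of `V` is an open edge:
it is the interior of a geodesic segment of positive length with endpoints in `V`. -/
def IsMetricSimplicialTree (X : Type*) [MetricSpace X] : Prop :=
  IsRTree X ∧
    ∃ V : Set X, IsClosed V ∧
      (∀ v ∈ V, ∃ ε > 0, ∀ w ∈ V, dist v w < ε → w = v) ∧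
      ∀ x ∈ Vᶜ, ∃ L > (0:ℝ), ∃ f : ℝ → X,
        (∀ s ∈ Set.Icc (0:ℝ) L, ∀ t ∈ Set.Icc (0:ℝ) L, dist (f s) (f t) = |s - t|) ∧
        f '' Set.Ioo 0 L = connectedComponentIn Vᶜ x ∧ f 0 ∈ V ∧ f L ∈ V

end Common

open scoped Classical

section CompleteGraph

/-- The convex combination `(1-t)·δ_u + t·δ_v` of two Dirac functions on `G`. -/
noncomputable def deltaComb {G : Type*} (u v : G) (t : ℝ) : G → ℝ :=
  fun x => (1 - t) * (if x = u then 1 else 0) + t * (if x = v then 1 else 0)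

/-- The geometric realization of the complete graph `K(G)` with vertex set `G`:
all convex combinations of two Dirac functions; `deltaComb u v t` is the point at
parameter `t` on the edge joining the vertices `u` and `v`. -/
def KG (G : Type*) : Type _ :=
  {f : G → ℝ // ∃ u v : G, ∃ t : ℝ, t ∈ Set.Icc (0:ℝ) 1 ∧ f = deltaComb u v t}

/-- The point at parameter `t ∈ [0,1]` on the edge of `K(G)` joining `u` to `v`. -/
noncomputable def kpt {G : Type*} (u v : G) (t : ℝ) (ht : t ∈ Set.Icc (0:ℝ) 1) : KG G :=
  ⟨deltaComb u v t, u, v, t, ht, rfl⟩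

/-- The vertex of `K(G)` corresponding to `g : G`. -/
noncomputable def vtx {G : Type*} (g : G) : KG G :=
  kpt g g 0 ⟨le_refl _, zero_le_one⟩

/-- The action of `G` on `K(G)` by left multiplication on the vertices, extended
affinely over the edges. -/
noncomputable def leftMulKG {G : Type*} [Group G] (g : G) (p : KG G) : KG G :=
  ⟨fun x => p.1 (g⁻¹ * x), by
    obtain ⟨u, v, t, ht, hf⟩ := p.2
    refine ⟨g * u, g * v, t, ht, ?_⟩
    funext x
    rw [hf]
    simp [deltaComb, inv_mul_eq_iff_eq_mul]⟩

/-- A map `ι : K(G) → H` is straight if it is linear on each edge of `K(G)`. -/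
def StraightOnKG {G H : Type*} [MetricSpace H] (ι : KG G → H) : Prop :=
  ∀ u v : G, ∀ t : ℝ, ∀ ht : t ∈ Set.Icc (0:ℝ) 1,
    dist (ι (kpt u v 0 ⟨le_refl _, zero_le_one⟩)) (ι (kpt u v t ht))
      = t * dist (ι (kpt u v 0 ⟨le_refl _, zero_le_one⟩))
          (ι (kpt u v 1 ⟨zero_le_one, le_refl _⟩))

/-- `r_S(x) = max {d(x, ρ(α)x) : α ∈ S}`. -/
noncomputable def rS {G H : Type*} [MetricSpace H] (S : Finset G) (hS : S.Nonempty)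
    (ρ : G → (H ≃ᵢ H)) (x : H) : ℝ :=
  S.sup' hS (fun α => dist x (ρ α x))

/-- The rescaling factor `λ = (max {1, d(ι(1_G), ι(s)) : s ∈ S})⁻¹`. -/
noncomputable def rescaleFactor {G H : Type*} [Group G] [MetricSpace H]
    (S : Finset G) (hS : S.Nonempty) (ι : KG G → H) : ℝ :=
  (max 1 (S.sup' hS fun s => dist (ι (vtx (1 : G))) (ι (vtx s))))⁻¹

end CompleteGraph

/-!
The four-point inequality `d(p,q) + d(r,s) ≤ max (d(p,r) + d(q,s)) (d(p,s) + d(q,r)) + δ` uses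
only distances, so, unlike thinness of triangles, it passes to rescaled limits, and the error
`λ_n δ` disappears there. A space satisfying it with `δ = 0` in which any two points are joined by
a geodesic is an `ℝ`-tree: removing a point separates the geodesics through it, so every arc runs
along the geodesic. In the limit of `K(G)` the edges are geodesics because the `ι_n` are straight,
and geodesics can be concatenated across a median.

For the convergence, displacement functions are group seminorms, hence bounded on each group
element by its word length times the maximum over the generators. So the rescaled distances between
vertices are bounded, and a blow-up forces `λ_n → 0`. A diagonal subsequence converges on a
countable family of points of `K(G)` that is dense up to the error `λ_n δ`, hence everywhere.
-/

open scoped Topology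

section FourPoint

/-- Gromov's four-point condition with additive error `δ`, i.e. hyperbolicity of a space that need
not be geodesic. -/
def FourPointCondition (X : Type*) [PseudoMetricSpace X] (δ : ℝ) : Prop :=
  ∀ p q r s : X, dist p q + dist r s ≤ max (dist p r + dist q s) (dist p s + dist q r) + δ

/-- The metric interval between `a` and `b`: the points where the triangle inequality is sharp. -/
def metricSegment {X : Type*} [PseudoMetricSpace X] (a b : X) : Set X :=
  {m | dist a m + dist m b = dist a b}

/-- Every distance from `a` up to `dist a b` is realized in the metric interval from `a` to `b`. In
a space with the four-point condition for `δ = 0` this is the existence of a geodesic. -/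
def HasFullSegment {X : Type*} [PseudoMetricSpace X] (a b : X) : Prop :=
  Icc 0 (dist a b) ⊆ dist a '' metricSegment a b

end FourPoint

section ThinTriangles

theorem exists_dist_le_of_isPreconnected_of_isCompact {X : Type*} [PseudoMetricSpace X]
    {s K L : Set X} {Δ : ℝ} (hs : IsPreconnected s) (hK : IsCompact K) (hL : IsCompact L)
    (hsK : (s ∩ K).Nonempty) (hsL : (s ∩ L).Nonempty)
    (hcover : ∀ x ∈ s, ∃ y ∈ K ∪ L, dist x y ≤ Δ) :
    ∃ x ∈ s, (∃ y ∈ K, dist x y ≤ Δ) ∧ ∃ z ∈ L, dist x z ≤ Δ := by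
  have hΔ : 0 ≤ Δ := by
    obtain ⟨x, hx, -⟩ := hsK
    obtain ⟨y, -, hxy⟩ := hcover x hx
    exact dist_nonneg.trans hxy
  obtain ⟨x, hx, hxK, hxL⟩ := isPreconnected_closed_iff.1 hs (cthickening Δ K) (cthickening Δ L)
    isClosed_cthickening isClosed_cthickening
    (fun x hx => by
      obtain ⟨y, hy | hy, hxy⟩ := hcover x hx
      · exact Or.inl (mem_cthickening_of_dist_le x y Δ K hy hxy)
      · exact Or.inr (mem_cthickening_of_dist_le x y Δ L hy hxy))
    (hsK.mono (inter_subset_inter_right s (self_subset_cthickening K)))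
    (hsL.mono (inter_subset_inter_right s (self_subset_cthickening L)))
  rw [hK.cthickening_eq_biUnion_closedBall hΔ] at hxK
  rw [hL.cthickening_eq_biUnion_closedBall hΔ] at hxL
  simp only [mem_iUnion, mem_closedBall, exists_prop] at hxK hxL
  exact ⟨x, hx, hxK, hxL⟩

variable {H : Type*} [MetricSpace H] {γ : ℝ → H} {a b : H}

namespace IsGeodesicSegment

theorem continuousOn (h : IsGeodesicSegment γ a b) : ContinuousOn γ (Icc 0 (dist a b)) :=
  (LipschitzOnWith.of_dist_le_mul (K := 1) fun s hs t ht => by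
    rw [h.2.2 s hs t ht, NNReal.coe_one, one_mul, Real.dist_eq]).continuousOn

theorem isCompact_segImage (h : IsGeodesicSegment γ a b) : IsCompact (segImage γ a b) :=
  isCompact_Icc.image_of_continuousOn h.continuousOn

theorem isPreconnected_segImage (h : IsGeodesicSegment γ a b) : IsPreconnected (segImage γ a b) :=
  isPreconnected_Icc.image γ h.continuousOn

theorem left_mem_segImage (h : IsGeodesicSegment γ a b) : a ∈ segImage γ a b :=
  ⟨0, left_mem_Icc.2 dist_nonneg, h.1⟩

theorem right_mem_segImage (h : IsGeodesicSegment γ a b) : b ∈ segImage γ a b :=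
  ⟨dist a b, right_mem_Icc.2 dist_nonneg, h.2.1⟩

theorem segImage_subset_metricSegment (h : IsGeodesicSegment γ a b) :
    segImage γ a b ⊆ metricSegment a b := by
  rintro _ ⟨t, ht, rfl⟩
  have hleft := h.2.2 0 (left_mem_Icc.2 dist_nonneg) t ht
  have hright := h.2.2 t ht (dist a b) (right_mem_Icc.2 dist_nonneg)
  rw [h.1, abs_of_nonpos (by linarith [ht.1])] at hleft
  rw [h.2.1, abs_of_nonpos (by linarith [ht.2])] at hright
  change dist a (γ t) + dist (γ t) b = dist a b
  linarith

end IsGeodesicSegment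

namespace ThinTriangles

variable {Δ : ℝ}

theorem exists_mem_segImage_two_mul_dist_le (hthin : ThinTriangles H Δ) (hgeo : GeodesicSpace H)
    (hγ : IsGeodesicSegment γ a b) (p : H) :
    ∃ y ∈ segImage γ a b, 2 * dist p y ≤ dist p a + dist p b - dist a b + 4 * Δ := by
  obtain ⟨γbp, hbp⟩ := hgeo b p
  obtain ⟨γpa, hpa⟩ := hgeo p a
  obtain ⟨y, hy, ⟨u, hu, hyu⟩, v, hv, hyv⟩ := exists_dist_le_of_isPreconnected_of_isCompact
    hγ.isPreconnected_segImage hbp.isCompact_segImage hpa.isCompact_segImage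
    ⟨b, hγ.right_mem_segImage, hbp.left_mem_segImage⟩
    ⟨a, hγ.left_mem_segImage, hpa.right_mem_segImage⟩
    (hthin a b p γ γbp γpa hγ hbp hpa)
  refine ⟨y, hy, ?_⟩
  have hay : dist a y + dist y b = dist a b := hγ.segImage_subset_metricSegment hy
  have hbu : dist b u + dist u p = dist b p := hbp.segImage_subset_metricSegment hu
  have hpv : dist p v + dist v a = dist p a := hpa.segImage_subset_metricSegment hv
  linarith [dist_triangle p u y, dist_triangle b u y, dist_triangle p v y, dist_triangle a v y,
    dist_comm p u, dist_comm u y, dist_comm b y, dist_comm v y, dist_comm v a, dist_comm b p]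

theorem fourPointCondition (hthin : ThinTriangles H Δ) (hgeo : GeodesicSpace H) :
    FourPointCondition H (6 * Δ) := by
  intro p q r s
  obtain ⟨γ, hγ⟩ := hgeo r s
  obtain ⟨γsq, hsq⟩ := hgeo s q
  obtain ⟨γqr, hqr⟩ := hgeo q r
  obtain ⟨y, hy, hpy⟩ := hthin.exists_mem_segImage_two_mul_dist_le hgeo hγ p
  obtain ⟨z, hz, hyz⟩ := hthin r s q γ γsq γqr hγ hsq hqr y hy
  rcases hz with hz | hz
  · have hszq : dist s z + dist z q = dist s q := hsq.segImage_subset_metricSegment hz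
    linarith [dist_triangle p y z, dist_triangle p z s, dist_triangle p z q, dist_comm z s,
      dist_comm s q, le_max_left (dist p r + dist q s) (dist p s + dist q r)]
  · have hqzr : dist q z + dist z r = dist q r := hqr.segImage_subset_metricSegment hz
    linarith [dist_triangle p y z, dist_triangle p z r, dist_triangle p z q, dist_comm z q,
      le_max_right (dist p r + dist q s) (dist p s + dist q r)]

end ThinTriangles

end ThinTriangles

section Tree

section Pseudo

variable {X : Type*} [PseudoMetricSpace X] {a b c m p : X}

theorem dist_eq_abs_sub_of_mem_metricSegment (h4 : FourPointCondition X 0)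
    (hm : m ∈ metricSegment a c) (hp : p ∈ metricSegment a c) :
    dist m p = |dist a m - dist a p| := by
  refine le_antisymm ?_ ?_
  · have h := h4 m p a c
    rw [add_zero, le_max_iff, dist_comm m a, dist_comm p a] at h
    have hm' : dist a m + dist m c = dist a c := hm
    have hp' : dist a p + dist p c = dist a c := hp
    rcases h with h | h
    · exact le_trans (by linarith) (le_abs_self _)
    · exact le_trans (by linarith) (neg_le_abs _)
  · rw [dist_comm a m, dist_comm a p]
    exact abs_dist_sub_le m p a

theorem mem_metricSegment_of_two_mul_dist_le (h4 : FourPointCondition X 0)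
    (hm : m ∈ metricSegment a b) (hle : 2 * dist a m ≤ dist a b + dist a c - dist b c) :
    m ∈ metricSegment a c := by
  have h := h4 m c a b
  rw [add_zero, le_max_iff, dist_comm m a, dist_comm c b, dist_comm c a] at h
  have hm' : dist a m + dist m b = dist a b := hm
  refine le_antisymm ?_ (dist_triangle a m c)
  rcases h with h | h <;> linarith

theorem metricSegment_comm (a b : X) : metricSegment a b = metricSegment b a := by
  ext m
  change dist a m + dist m b = dist a b ↔ dist b m + dist m a = dist b a
  rw [add_comm, dist_comm m b, dist_comm a m, dist_comm a b]

namespace HasFullSegment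

theorem symm (h : HasFullSegment a b) : HasFullSegment b a := by
  rintro t ⟨ht0, ht⟩
  rw [dist_comm] at ht
  obtain ⟨m, hm, hmt⟩ := h (show dist a b - t ∈ Icc 0 (dist a b) from ⟨by linarith, by linarith⟩)
  refine ⟨m, metricSegment_comm a b ▸ hm, ?_⟩
  have hm' : dist a m + dist m b = dist a b := hm
  linarith [dist_comm m b]

theorem trans (h4 : FourPointCondition X 0) (hab : HasFullSegment a b) (hbc : HasFullSegment b c) :
    HasFullSegment a c := by
  rintro t ⟨ht0, ht⟩
  have htri := dist_triangle a b c
  rcases le_or_gt (2 * t) (dist a b + dist a c - dist b c) with hle | hgt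
  · obtain ⟨m, hm, rfl⟩ := hab ⟨ht0, by linarith⟩
    exact ⟨m, mem_metricSegment_of_two_mul_dist_le h4 hm hle, rfl⟩
  · obtain ⟨m, hm, hmt⟩ := hbc.symm (show dist a c - t ∈ Icc 0 (dist c b) from
      ⟨by linarith, by rw [dist_comm c b]; linarith⟩)
    have hm' : m ∈ metricSegment c a := mem_metricSegment_of_two_mul_dist_le h4 hm
      (by linarith [dist_comm c b, dist_comm c a, dist_comm b a])
    rw [metricSegment_comm] at hm'
    refine ⟨m, hm', ?_⟩
    have hsum : dist a m + dist m c = dist a c := hm'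
    linarith [dist_comm m c]

theorem left_of_mem_metricSegment (h4 : FourPointCondition X 0) (h : HasFullSegment a b)
    (hp : p ∈ metricSegment a b) : HasFullSegment a p := by
  rintro t ⟨ht0, ht⟩
  have hp' : dist a p + dist p b = dist a b := hp
  obtain ⟨m, hm, rfl⟩ := h ⟨ht0, by linarith [dist_nonneg (x := p) (y := b)]⟩
  refine ⟨m, ?_, rfl⟩
  change dist a m + dist m p = dist a p
  rw [dist_eq_abs_sub_of_mem_metricSegment h4 hm hp, abs_of_nonpos (by linarith)]
  ring

theorem exists_median (h4 : FourPointCondition X 0) (h : HasFullSegment a b) (c : X) :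
    ∃ m, m ∈ metricSegment a b ∧ m ∈ metricSegment a c ∧ m ∈ metricSegment b c := by
  obtain ⟨m, hm, hmt⟩ := h
    (show (dist a b + dist a c - dist b c) / 2 ∈ Icc 0 (dist a b) from
      ⟨by linarith [dist_triangle b a c, dist_comm a b], by linarith [dist_triangle a b c]⟩)
  have hsum : dist a m + dist m b = dist a b := hm
  refine ⟨m, hm, mem_metricSegment_of_two_mul_dist_le h4 hm (by linarith),
    mem_metricSegment_of_two_mul_dist_le h4 (metricSegment_comm a b ▸ hm) ?_⟩
  linarith [dist_comm b m, dist_comm b a]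

end HasFullSegment

end Pseudo

variable {X : Type*} [MetricSpace X] {a b m : X}

theorem HasFullSegment.exists_isGeodesicSegment (h4 : FourPointCondition X 0)
    (h : HasFullSegment a b) : ∃ γ : ℝ → X, IsGeodesicSegment γ a b := by
  have : Nonempty X := ⟨a⟩
  have hpoint : ∀ t ∈ Icc 0 (dist a b), ∃ m, m ∈ metricSegment a b ∧ dist a m = t :=
    fun t ht => h ht
  choose! γ hγ hdist using hpoint
  refine ⟨γ, ?_, ?_, fun s hs t ht => ?_⟩
  · exact (dist_eq_zero.1 (hdist 0 (left_mem_Icc.2 dist_nonneg))).symm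
  · have hmem := right_mem_Icc.2 (dist_nonneg (x := a) (y := b))
    have hsum : dist a (γ (dist a b)) + dist (γ (dist a b)) b = dist a b := hγ _ hmem
    exact dist_eq_zero.1 (by linarith [hdist _ hmem])
  · rw [dist_eq_abs_sub_of_mem_metricSegment h4 (hγ s hs) (hγ t ht), hdist s hs, hdist t ht]

theorem isOpen_setOf_mem_metricSegment_diff_singleton (h4 : FourPointCondition X 0) (a m : X) :
    IsOpen ({x | m ∈ metricSegment a x} \ {m}) := by
  rw [Metric.isOpen_iff]
  rintro x ⟨hx, hxm⟩
  refine ⟨dist m x, dist_pos.2 (Ne.symm hxm), fun y hy => ⟨?_, ?_⟩⟩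
  · have hx' : dist a m + dist m x = dist a x := hx
    rw [mem_ball] at hy
    refine le_antisymm ?_ (dist_triangle a m y)
    have h := h4 a x m y
    rw [add_zero, le_max_iff, dist_comm x m, dist_comm x y] at h
    rcases h with h | h <;> linarith [dist_nonneg (x := m) (y := y)]
  · rintro rfl
    exact lt_irrefl _ (mem_ball.1 hy)

theorem metricSegment_subset_of_isPreconnected (h4 : FourPointCondition X 0) {A : Set X}
    (hA : IsPreconnected A) (ha : a ∈ A) (hb : b ∈ A) : metricSegment a b ⊆ A := by
  intro m hm
  by_contra hmA
  have hne : ∀ x ∈ A, x ≠ m := fun x hx hxm => hmA (hxm ▸ hx)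
  let near : Set X := {x | dist a x < dist a m + dist m x}
  let beyond : Set X := {x | m ∈ metricSegment a x} \ {m}
  have hdisj : Disjoint near beyond :=
    Set.disjoint_left.2 fun x hx hx' => (ne_of_gt hx) hx'.1
  have hcover : A ⊆ near ∪ beyond := fun x hx =>
    (dist_triangle a m x).lt_or_eq.imp id fun h => ⟨h.symm, hne x hx⟩
  have ha_near : a ∈ near := by
    change dist a a < dist a m + dist m a
    rw [dist_self]
    have := dist_pos.2 (hne a ha)
    positivity
  have hsub : A ⊆ near := hA.subset_left_of_subset_union
    (isOpen_lt (by fun_prop) (by fun_prop))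
    (isOpen_setOf_mem_metricSegment_diff_singleton h4 a m) hdisj hcover ⟨a, ha, ha_near⟩
  exact (ne_of_gt (hsub hb)) hm

theorem IsArcParam.image_Icc_eq_metricSegment (h4 : FourPointCondition X 0)
    (hfull : ∀ x y : X, HasFullSegment x y) {α : ℝ → X} (hα : IsArcParam α a b) :
    α '' Icc 0 1 = metricSegment a b := by
  obtain ⟨hcont, hinj, rfl, rfl⟩ := hα
  have hpath : ∀ s ∈ Icc (0 : ℝ) 1, ∀ t ∈ Icc (0 : ℝ) 1, s ≤ t →
      metricSegment (α s) (α t) ⊆ α '' Icc s t := fun s hs t ht hst =>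
    metricSegment_subset_of_isPreconnected h4
      (isPreconnected_Icc.image α (hcont.mono (Icc_subset_Icc hs.1 ht.2)))
      (mem_image_of_mem α (left_mem_Icc.2 hst)) (mem_image_of_mem α (right_mem_Icc.2 hst))
  have h0 : (0 : ℝ) ∈ Icc (0 : ℝ) 1 := left_mem_Icc.2 zero_le_one
  have h1 : (1 : ℝ) ∈ Icc (0 : ℝ) 1 := right_mem_Icc.2 zero_le_one
  refine Subset.antisymm ?_ (hpath 0 h0 1 h1 zero_le_one)
  rintro _ ⟨s, hs, rfl⟩
  -- The median of `α 0`, `α s`, `α 1` lies on both halves of the arc, hence equals `α s` by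
  -- injectivity.
  obtain ⟨m, hm0s, hm01, hms1⟩ := (hfull (α 0) (α s)).exists_median h4 (α 1)
  obtain ⟨t, ht, rfl⟩ := hpath 0 h0 s hs hs.1 hm0s
  obtain ⟨t', ht', heq⟩ := hpath s hs 1 h1 hs.2 hms1
  have htt' : t' = t := hinj ⟨hs.1.trans ht'.1, ht'.2⟩ ⟨ht.1, ht.2.trans hs.2⟩ heq
  have hts : t = s := le_antisymm ht.2 (htt' ▸ ht'.1)
  exact hts ▸ hm01

theorem isRTree_of_hasFullSegment (h4 : FourPointCondition X 0)
    (hfull : ∀ a b : X, HasFullSegment a b) : IsRTree X :=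
  ⟨fun a b => (hfull a b).exists_isGeodesicSegment h4, fun _ _ _ _ hα hβ =>
    (hα.image_Icc_eq_metricSegment h4 hfull).trans (hβ.image_Icc_eq_metricSegment h4 hfull).symm⟩

end Tree

section RescaledLimit

theorem exists_tendsto_of_forall_exists_eventually_dist_le {κ Y : Type*} [PseudoMetricSpace Y]
    [CompleteSpace Y] {l : Filter κ} [l.NeBot] {a : κ → Y}
    (h : ∀ ε > 0, ∃ b : κ → Y, (∃ y, Tendsto b l (𝓝 y)) ∧ ∀ᶠ n in l, dist (a n) (b n) ≤ ε) :
    ∃ y, Tendsto a l (𝓝 y) := by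
  rw [← cauchy_map_iff_exists_tendsto, Metric.cauchy_iff]
  refine ⟨inferInstance, fun ε hε => ?_⟩
  obtain ⟨b, ⟨y, hb⟩, hab⟩ := h (ε / 4) (by positivity)
  have hclose : ∀ᶠ n in l, dist (a n) y < ε / 2 := by
    filter_upwards [hab, Metric.tendsto_nhds.1 hb (ε / 4) (by positivity)] with n han hbn
    linarith [dist_triangle (a n) (b n) y]
  refine ⟨ball y (ε / 2), hclose, fun u hu v hv => ?_⟩
  rw [mem_ball] at hu hv
  linarith [dist_triangle_right u v y]

theorem exists_subseq_tendsto_rescaled_dist {X I : Type*} [Countable I] {H : ℕ → Type*}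
    [∀ n, PseudoMetricSpace (H n)] {c : ℕ → ℝ} (hc : ∀ n, 0 ≤ c n) (f : ∀ n, X → H n) (pt : I → X)
    (hbdd : ∀ i j, ∃ C, ∀ n, c n * dist (f n (pt i)) (f n (pt j)) ≤ C)
    (hdense : ∀ p, ∀ ε > 0, ∃ i, ∀ᶠ n in atTop, c n * dist (f n p) (f n (pt i)) ≤ ε) :
    ∃ φ : ℕ → ℕ, StrictMono φ ∧ ∃ dbar : X → X → ℝ, ∀ p q,
      Tendsto (fun k => c (φ k) * dist (f (φ k) p) (f (φ k) q)) atTop (𝓝 (dbar p q)) := by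
  choose C hC using hbdd
  obtain ⟨lim, -, φ, hφ, hlim⟩ :=
    (isCompact_univ_pi fun ij : I × I => isCompact_Icc (a := 0) (b := C ij.1 ij.2)).tendsto_subseq
      (x := fun n ij => c n * dist (f n (pt ij.1)) (f n (pt ij.2)))
      fun n ij _ => ⟨mul_nonneg (hc n) dist_nonneg, hC ij.1 ij.2 n⟩
  rw [tendsto_pi_nhds] at hlim
  suffices ∀ p q, ∃ L,
      Tendsto (fun k => c (φ k) * dist (f (φ k) p) (f (φ k) q)) atTop (𝓝 L) by
    choose dbar hdbar using this
    exact ⟨φ, hφ, dbar, hdbar⟩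
  refine fun p q => exists_tendsto_of_forall_exists_eventually_dist_le fun ε hε => ?_
  obtain ⟨i, hi⟩ := hdense p (ε / 2) (by positivity)
  obtain ⟨j, hj⟩ := hdense q (ε / 2) (by positivity)
  refine ⟨_, ⟨_, hlim (i, j)⟩, ?_⟩
  filter_upwards [hφ.tendsto_atTop.eventually hi, hφ.tendsto_atTop.eventually hj] with k hpi hqj
  calc dist (c (φ k) * dist (f (φ k) p) (f (φ k) q))
        (c (φ k) * dist (f (φ k) (pt i)) (f (φ k) (pt j)))
      = c (φ k) * dist (dist (f (φ k) p) (f (φ k) q))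
          (dist (f (φ k) (pt i)) (f (φ k) (pt j))) := by
        rw [Real.dist_eq, ← mul_sub, abs_mul, abs_of_nonneg (hc _), ← Real.dist_eq]
    _ ≤ c (φ k) * (dist (f (φ k) p) (f (φ k) (pt i)) + dist (f (φ k) q) (f (φ k) (pt j))) :=
        mul_le_mul_of_nonneg_left (dist_dist_dist_le _ _ _ _) (hc _)
    _ ≤ ε := by rw [mul_add]; linarith

variable {κ : Type*} {l : Filter κ} [l.NeBot] {H : κ → Type*} [∀ n, PseudoMetricSpace (H n)]
  {c : κ → ℝ}

theorem exists_metricSpace_quotient_of_tendsto {X : Type u} {f : ∀ n, X → H n} {d : X → X → ℝ}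
    (hc : ∀ n, 0 ≤ c n)
    (hlim : ∀ p q, Tendsto (fun n => c n * dist (f n p) (f n q)) l (𝓝 (d p q))) :
    ∃ (T : Type u) (_ : MetricSpace T) (π : X → T),
      Function.Surjective π ∧ ∀ p q, dist (π p) (π q) = d p q := by
  let _ : PseudoMetricSpace X :=
    { dist := d
      dist_self := fun p => tendsto_nhds_unique (hlim p p) (by simp)
      dist_comm := fun p q =>
        tendsto_nhds_unique (hlim p q) (by simpa only [dist_comm] using hlim q p)
      dist_triangle := fun p q r =>
        le_of_tendsto_of_tendsto' (hlim p r) ((hlim p q).add (hlim q r)) fun n => by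
          rw [← mul_add]
          exact mul_le_mul_of_nonneg_left (dist_triangle _ _ _) (hc n) }
  exact ⟨SeparationQuotient X, inferInstance, SeparationQuotient.mk,
    SeparationQuotient.surjective_mk, SeparationQuotient.dist_mk⟩

theorem FourPointCondition.of_tendsto {X T : Type*} [PseudoMetricSpace T] {f : ∀ n, X → H n}
    {π : X → T} {δ : κ → ℝ} {δ' : ℝ} (h4 : ∀ n, FourPointCondition (H n) (δ n))
    (hc : ∀ n, 0 ≤ c n) (hπ : Function.Surjective π)
    (hlim : ∀ p q, Tendsto (fun n => c n * dist (f n p) (f n q)) l (𝓝 (dist (π p) (π q))))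
    (hδ : Tendsto (fun n => c n * δ n) l (𝓝 δ')) : FourPointCondition T δ' := by
  intro p q r s
  obtain ⟨p, rfl⟩ := hπ p
  obtain ⟨q, rfl⟩ := hπ q
  obtain ⟨r, rfl⟩ := hπ r
  obtain ⟨s, rfl⟩ := hπ s
  refine le_of_tendsto_of_tendsto' ((hlim p q).add (hlim r s))
    ((((hlim p r).add (hlim q s)).max ((hlim p s).add (hlim q r))).add hδ) fun n => ?_
  rw [← mul_add, ← mul_add, ← mul_add, ← mul_max_of_nonneg _ _ (hc n), ← mul_add]
  exact mul_le_mul_of_nonneg_left (h4 n _ _ _ _) (hc n)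

end RescaledLimit

section CompleteGraphMaps

variable {V : Type*}

theorem kpt_zero (u v : V) (h : (0 : ℝ) ∈ Icc (0 : ℝ) 1) : kpt u v 0 h = vtx u :=
  Subtype.ext (funext fun x => by simp [kpt, vtx, deltaComb])

theorem kpt_one (u v : V) (h : (1 : ℝ) ∈ Icc (0 : ℝ) 1) : kpt u v 1 h = vtx v :=
  Subtype.ext (funext fun x => by simp [kpt, vtx, deltaComb])

theorem kpt_symm (u v : V) {t : ℝ} (ht : t ∈ Icc (0 : ℝ) 1) :
    kpt u v t ht = kpt v u (1 - t) (Icc.mem_iff_one_sub_mem.1 ht) :=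
  Subtype.ext (funext fun x => by simp only [kpt, deltaComb]; ring)

theorem exists_eq_kpt (p : KG V) : ∃ u v t, ∃ ht, p = kpt u v t ht :=
  let ⟨u, v, t, ht, hp⟩ := p.2
  ⟨u, v, t, ht, Subtype.ext hp⟩

namespace StraightOnKG

variable {H : Type*} [MetricSpace H] {ι : KG V → H} {s t : ℝ}

theorem dist_vtx_kpt (h : StraightOnKG ι) (u v : V) (ht : t ∈ Icc (0 : ℝ) 1) :
    dist (ι (vtx u)) (ι (kpt u v t ht)) = t * dist (ι (vtx u)) (ι (vtx v)) := by
  rw [← kpt_zero u v ⟨le_rfl, zero_le_one⟩, ← kpt_one u v ⟨zero_le_one, le_rfl⟩]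
  exact h u v t ht

theorem dist_kpt_vtx (h : StraightOnKG ι) (u v : V) (ht : t ∈ Icc (0 : ℝ) 1) :
    dist (ι (kpt u v t ht)) (ι (vtx v)) = (1 - t) * dist (ι (vtx u)) (ι (vtx v)) := by
  rw [kpt_symm, dist_comm, h.dist_vtx_kpt, dist_comm (ι (vtx u))]

theorem dist_kpt_kpt_le {δ : ℝ} (h4 : FourPointCondition H δ) (h : StraightOnKG ι) (u v : V)
    (hs : s ∈ Icc (0 : ℝ) 1) (ht : t ∈ Icc (0 : ℝ) 1) :
    dist (ι (kpt u v s hs)) (ι (kpt u v t ht)) ≤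
      |s - t| * dist (ι (vtx u)) (ι (vtx v)) + δ := by
  have hfour := h4 (ι (kpt u v s hs)) (ι (kpt u v t ht)) (ι (vtx u)) (ι (vtx v))
  rw [dist_comm _ (ι (vtx u)), dist_comm _ (ι (vtx u)), h.dist_vtx_kpt, h.dist_vtx_kpt,
    h.dist_kpt_vtx, h.dist_kpt_vtx] at hfour
  set L := dist (ι (vtx u)) (ι (vtx v))
  have hst : (s - t) * L ≤ |s - t| * L := mul_le_mul_of_nonneg_right (le_abs_self _) dist_nonneg
  have hts : -(s - t) * L ≤ |s - t| * L := mul_le_mul_of_nonneg_right (neg_le_abs _) dist_nonneg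
  have hmax : max (s * L + (1 - t) * L) ((1 - s) * L + t * L) ≤ |s - t| * L + L :=
    max_le (by linarith) (by linarith)
  linarith

theorem dist_kpt_kpt_le_add (h : StraightOnKG ι) (u v u' v' : V) (hs : s ∈ Icc (0 : ℝ) 1)
    (ht : t ∈ Icc (0 : ℝ) 1) :
    dist (ι (kpt u v s hs)) (ι (kpt u' v' t ht)) ≤
      dist (ι (vtx u)) (ι (vtx v)) + dist (ι (vtx u)) (ι (vtx u')) +
        dist (ι (vtx u')) (ι (vtx v')) := by
  have hle : ∀ u v : V, ∀ {r : ℝ} (hr : r ∈ Icc (0 : ℝ) 1),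
      dist (ι (vtx u)) (ι (kpt u v r hr)) ≤ dist (ι (vtx u)) (ι (vtx v)) := fun u v r hr =>
    (h.dist_vtx_kpt u v hr).trans_le (mul_le_of_le_one_left dist_nonneg hr.2)
  refine (dist_triangle4 _ (ι (vtx u)) (ι (vtx u')) _).trans ?_
  rw [dist_comm (ι (kpt u v s hs))]
  gcongr <;> exact hle _ _ _

theorem hasFullSegment_vtx_vtx (h : StraightOnKG ι) (u v : V) :
    HasFullSegment (ι (vtx u)) (ι (vtx v)) := by
  rintro t ⟨ht0, ht⟩
  set L := dist (ι (vtx u)) (ι (vtx v))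
  have hmem : t / L ∈ Icc (0 : ℝ) 1 :=
    ⟨div_nonneg ht0 dist_nonneg, div_le_one_of_le₀ ht dist_nonneg⟩
  refine ⟨ι (kpt u v (t / L) hmem), ?_, ?_⟩
  · change _ + _ = _
    rw [h.dist_vtx_kpt, h.dist_kpt_vtx]
    ring
  · rw [h.dist_vtx_kpt]
    exact div_mul_cancel_of_imp fun hL => le_antisymm (hL ▸ ht) ht0

theorem isRTree_of_surjective (h4 : FourPointCondition H 0) (h : StraightOnKG ι)
    (hι : Function.Surjective ι) : IsRTree H := by
  have hvtx : ∀ p, ∃ u, HasFullSegment (ι (vtx u)) (ι p) := by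
    intro p
    obtain ⟨u, v, t, ht, rfl⟩ := exists_eq_kpt p
    refine ⟨u, (h.hasFullSegment_vtx_vtx u v).left_of_mem_metricSegment h4 ?_⟩
    change _ + _ = _
    rw [h.dist_vtx_kpt, h.dist_kpt_vtx]
    ring
  refine isRTree_of_hasFullSegment h4 fun a b => ?_
  obtain ⟨p, rfl⟩ := hι a
  obtain ⟨q, rfl⟩ := hι b
  obtain ⟨u, hu⟩ := hvtx p
  obtain ⟨v, hv⟩ := hvtx q
  exact (hu.symm.trans h4 (h.hasFullSegment_vtx_vtx u v)).trans h4 hv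

theorem of_tendsto {κ T : Type*} [MetricSpace T] {l : Filter κ} [l.NeBot] {H : κ → Type*}
    [∀ n, MetricSpace (H n)] {c : κ → ℝ} {ι : ∀ n, KG V → H n} {π : KG V → T}
    (hι : ∀ n, StraightOnKG (ι n))
    (hlim : ∀ p q, Tendsto (fun n => c n * dist (ι n p) (ι n q)) l (𝓝 (dist (π p) (π q)))) :
    StraightOnKG π := by
  refine fun u v t ht => tendsto_nhds_unique (hlim _ _) (((hlim _ _).const_mul t).congr fun n => ?_)
  rw [hι n u v t ht]
  ring

end StraightOnKG

theorem exists_subseq_tendsto_of_straightOnKG [Countable V] {H : ℕ → Type*}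
    [∀ n, MetricSpace (H n)] {c δ : ℕ → ℝ} {ι : ∀ n, KG V → H n} (hc : ∀ n, 0 ≤ c n)
    (h4 : ∀ n, FourPointCondition (H n) (δ n)) (hδ : Tendsto (fun n => c n * δ n) atTop (𝓝 0))
    (hι : ∀ n, StraightOnKG (ι n))
    (hbdd : ∀ u v, ∃ C, ∀ n, c n * dist (ι n (vtx u)) (ι n (vtx v)) ≤ C) :
    ∃ φ : ℕ → ℕ, StrictMono φ ∧ ∃ dbar : KG V → KG V → ℝ, ∀ p q,
      Tendsto (fun k => c (φ k) * dist (ι (φ k) p) (ι (φ k) q)) atTop (𝓝 (dbar p q)) := by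
  choose C hC using hbdd
  let param : ℕ → Icc (0 : ℝ) 1 := TopologicalSpace.denseSeq _
  refine exists_subseq_tendsto_rescaled_dist hc ι
    (fun i : V × V × ℕ => kpt i.1 i.2.1 (param i.2.2) (param i.2.2).2)
    (fun i j => ⟨C i.1 i.2.1 + C i.1 j.1 + C j.1 j.2.1, fun n => ?_⟩) fun p ε hε => ?_
  · have h := mul_le_mul_of_nonneg_left ((hι n).dist_kpt_kpt_le_add i.1 i.2.1 j.1 j.2.1
      (param i.2.2).2 (param j.2.2).2) (hc n)
    rw [mul_add, mul_add] at h
    linarith [hC i.1 i.2.1 n, hC i.1 j.1 n, hC j.1 j.2.1 n]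
  · obtain ⟨u, v, t, ht, rfl⟩ := exists_eq_kpt p
    have hC0 : 0 ≤ C u v := (mul_nonneg (hc 0) dist_nonneg).trans (hC u v 0)
    obtain ⟨k, hk⟩ := (TopologicalSpace.denseRange_denseSeq (Icc (0 : ℝ) 1)).exists_dist_lt
      ⟨t, ht⟩ (show 0 < ε / 2 / (C u v + 1) by positivity)
    have hk' : |t - param k| * (C u v + 1) < ε / 2 := (lt_div_iff₀ (by positivity)).1 hk
    refine ⟨(u, v, k), ?_⟩
    filter_upwards [hδ.eventually (gt_mem_nhds (half_pos hε))] with n hn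
    calc c n * dist (ι n (kpt u v t ht)) (ι n (kpt u v (param k) (param k).2))
        ≤ c n * (|t - param k| * dist (ι n (vtx u)) (ι n (vtx v)) + δ n) :=
          mul_le_mul_of_nonneg_left ((hι n).dist_kpt_kpt_le (h4 n) u v ht _) (hc n)
      _ = |t - param k| * (c n * dist (ι n (vtx u)) (ι n (vtx v))) + c n * δ n := by ring
      _ ≤ |t - param k| * (C u v + 1) + c n * δ n := by
          gcongr
          linarith [hC u v n]
      _ ≤ ε := by linarith

end CompleteGraphMaps

section Displacement

variable {G : Type*} [Group G]

theorem countable_of_closure_eq_top {S : Set G} [Countable S] (hS : Subgroup.closure S = ⊤) :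
    Countable G := by
  have : Countable (FreeGroup S) := Quot.mk_surjective.countable
  refine Function.Surjective.countable (f := FreeGroup.lift ((↑) : S → G)) ?_
  rw [← MonoidHom.range_eq_top, FreeGroup.range_lift_eq_closure, Subtype.range_coe, hS]

/-- The constant is the word length of `g`. -/
theorem exists_forall_groupSeminorm_le_mul {S : Set G} (hS : Subgroup.closure S = ⊤) (g : G) :
    ∃ C : ℕ, ∀ (f : GroupSeminorm G) (R : ℝ), (∀ s ∈ S, f s ≤ R) → f g ≤ C * R := by
  have hg : g ∈ Subgroup.closure S := hS ▸ Subgroup.mem_top g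
  induction hg using Subgroup.closure_induction with
  | mem s hs => exact ⟨1, fun f R h => by simpa using h s hs⟩
  | one => exact ⟨0, fun f R _ => by simp⟩
  | mul g h _ _ hg hh =>
    obtain ⟨C, hC⟩ := hg
    obtain ⟨D, hD⟩ := hh
    refine ⟨C + D, fun f R hR => (map_mul_le_add f g h).trans ?_⟩
    push_cast
    linarith [hC f R hR, hD f R hR]
  | inv g _ hg =>
    obtain ⟨C, hC⟩ := hg
    exact ⟨C, fun f R hR => (map_inv_eq_map f g).trans_le (hC f R hR)⟩

/-- The displacement function `g ↦ d(x, ρ(g) x)` of an isometric action at `x`. -/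
noncomputable def displacementSeminorm {H : Type*} [PseudoMetricSpace H] (ρ : G →* (H ≃ᵢ H))
    (x : H) : GroupSeminorm G where
  toFun g := dist x (ρ g x)
  map_one' := by simp
  mul_le' g h := by
    have := dist_triangle x (ρ g x) (ρ g (ρ h x))
    rwa [(ρ g).dist_eq, ← IsometryEquiv.mul_apply, ← map_mul] at this
  inv' g := by
    rw [← (ρ g).dist_eq, ← IsometryEquiv.mul_apply, ← map_mul, mul_inv_cancel, dist_comm]
    simp

variable {H : Type*} [MetricSpace H] {ρ : G →* (H ≃ᵢ H)} {x : H} {ι : KG G → H}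

theorem dist_vtx_vtx_eq_displacementSeminorm (hι : ∀ g, ι (vtx g) = ρ g x) (u v : G) :
    dist (ι (vtx u)) (ι (vtx v)) = displacementSeminorm ρ x (u⁻¹ * v) := by
  rw [hι, hι, ← (ρ u⁻¹).dist_eq, ← IsometryEquiv.mul_apply, ← IsometryEquiv.mul_apply, ← map_mul,
    ← map_mul, inv_mul_cancel, map_one]
  rfl

variable {S : Finset G} (hS : S.Nonempty)

theorem rescaleFactor_pos (ι : KG G → H) : 0 < rescaleFactor S hS ι :=
  inv_pos.2 (zero_lt_one.trans_le (le_max_left _ _))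

theorem displacementSeminorm_le_inv_rescaleFactor (hι : ∀ g, ι (vtx g) = ρ g x) {s : G}
    (hs : s ∈ S) : displacementSeminorm ρ x s ≤ (rescaleFactor S hS ι)⁻¹ := by
  have hdist := dist_vtx_vtx_eq_displacementSeminorm hι 1 s
  rw [inv_one, one_mul] at hdist
  rw [rescaleFactor, inv_inv, ← hdist]
  exact (Finset.le_sup' (fun s => dist (ι (vtx 1)) (ι (vtx s))) hs).trans (le_max_right _ _)

end Displacement

section Rescaling

variable {G : Type*} [Group G] {S : Finset G} (hS : S.Nonempty)
  (hgen : Subgroup.closure (S : Set G) = ⊤) {κ : Type*} {H : κ → Type*} [∀ n, MetricSpace (H n)]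
  {ρ : ∀ n, G →* (H n ≃ᵢ H n)} {x : ∀ n, H n} {ι : ∀ n, KG G → H n}
  (hvert : ∀ n g, ι n (vtx g) = ρ n g (x n))

include hgen hvert

theorem exists_rescaleFactor_mul_displacementSeminorm_le (g : G) :
    ∃ C : ℝ, ∀ n, rescaleFactor S hS (ι n) * displacementSeminorm (ρ n) (x n) g ≤ C := by
  obtain ⟨C, hC⟩ := exists_forall_groupSeminorm_le_mul hgen g
  refine ⟨C, fun n => ?_⟩
  have hpos := rescaleFactor_pos hS (ι n)
  rw [mul_comm, ← le_div_iff₀ hpos, div_eq_mul_inv]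
  exact hC _ _ fun s hs => displacementSeminorm_le_inv_rescaleFactor hS (hvert n) hs

theorem tendsto_rescaleFactor_zero {l : Filter κ} {α : G}
    (hα : Tendsto (fun n => translationLength (ρ n α)) l atTop) :
    Tendsto (fun n => rescaleFactor S hS (ι n)) l (𝓝 0) := by
  obtain ⟨C, hC⟩ := exists_rescaleFactor_mul_displacementSeminorm_le hS hgen hvert α
  refine tendsto_of_tendsto_of_tendsto_of_le_of_le' tendsto_const_nhds
    (hα.const_div_atTop C) (.of_forall fun n => (rescaleFactor_pos hS (ι n)).le) ?_
  filter_upwards [hα.eventually_gt_atTop 0] with n hn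
  have hle : translationLength (ρ n α) ≤ displacementSeminorm (ρ n) (x n) α :=
    ciInf_le ⟨0, forall_mem_range.2 fun _ => dist_nonneg⟩ (x n)
  rw [le_div_iff₀ hn]
  exact (mul_le_mul_of_nonneg_left hle (rescaleFactor_pos hS (ι n)).le).trans (hC n)

end Rescaling

theorem blowup_gives_rtree_general {G : Type u} [Group G] (S : Finset G) (hS : S.Nonempty)
    (hgen : Subgroup.closure (S : Set G) = ⊤) {H : ℕ → Type v} [∀ n, MetricSpace (H n)]
    {δ : ℕ → ℝ} (h4 : ∀ n, FourPointCondition (H n) (δ n)) (ρ : ∀ n, G →* (H n ≃ᵢ H n))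
    (x : ∀ n, H n) (ι : ∀ n, KG G → H n) (hvert : ∀ n g, ι n (vtx g) = ρ n g (x n))
    (hstraight : ∀ n, StraightOnKG (ι n))
    (hδ : Tendsto (fun n => rescaleFactor S hS (ι n) * δ n) atTop (𝓝 0)) :
    ∃ φ : ℕ → ℕ, StrictMono φ ∧
      ∃ dbar : KG G → KG G → ℝ,
        (∀ p, dbar p p = 0) ∧ (∀ p q, dbar p q = dbar q p) ∧
        (∀ p q r, dbar p r ≤ dbar p q + dbar q r) ∧
        (∀ p q : KG G, Tendsto
          (fun i => rescaleFactor S hS (ι (φ i)) * dist (ι (φ i) p) (ι (φ i) q))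
          atTop (𝓝 (dbar p q))) ∧
        ∃ (T : Type u) (_ : MetricSpace T) (π : KG G → T),
          Function.Surjective π ∧ (∀ p q, dist (π p) (π q) = dbar p q) ∧ IsRTree T := by
  have : Countable G := countable_of_closure_eq_top hgen
  have hc : ∀ n, 0 ≤ rescaleFactor S hS (ι n) := fun n => (rescaleFactor_pos hS (ι n)).le
  obtain ⟨φ, hφ, dbar, hlim⟩ := exists_subseq_tendsto_of_straightOnKG hc h4 hδ hstraight fun u v =>
    by simpa only [dist_vtx_vtx_eq_displacementSeminorm (hvert _)] using
      exists_rescaleFactor_mul_displacementSeminorm_le hS hgen hvert (u⁻¹ * v)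
  obtain ⟨T, _, π, hπ, hdist⟩ := exists_metricSpace_quotient_of_tendsto (fun k => hc (φ k)) hlim
  obtain rfl : (fun p q => dist (π p) (π q)) = dbar := funext₂ hdist
  have hT4 : FourPointCondition T 0 := .of_tendsto (fun k => h4 (φ k)) (fun k => hc (φ k)) hπ hlim
    (hδ.comp hφ.tendsto_atTop)
  have hTstraight : StraightOnKG π := .of_tendsto (fun k => hstraight (φ k)) hlim
  exact ⟨φ, hφ, fun p q => dist (π p) (π q), fun _ => dist_self _, fun _ _ => dist_comm _ _,
    fun _ _ _ => dist_triangle _ _ _, hlim, T, _, π, hπ, fun _ _ => rfl,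
    hTstraight.isRTree_of_surjective hT4 hπ⟩

/-- For a blowing-up sequence of isometric actions of a finitely
generated group on a geodesic space with `Δ`-thin triangles, the rescaled pullback
pseudo-metrics on the complete graph `K(G)` (based at approximate centers) subconverge
pointwise to a pseudo-metric whose associated metric space is an `ℝ`-tree. -/
theorem blowup_gives_rtree {G : Type u} [Group G]
    (S : Finset G) (hS : S.Nonempty) (hgen : Subgroup.closure (S : Set G) = ⊤)
    {H : Type v} [MetricSpace H] [Nonempty H] {Δ : ℝ} (hΔ : 0 < Δ)
    (hgeo : GeodesicSpace H) (hthin : ThinTriangles H Δ)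
    (ρ : ℕ → G →* (H ≃ᵢ H))
    (hblow : ∃ α : G,
      Filter.Tendsto (fun n => translationLength (ρ n α)) Filter.atTop Filter.atTop)
    (x : ℕ → H)
    (hcenter : ∀ n, ∀ y : H, rS S hS (ρ n) (x n) ≤ rS S hS (ρ n) y + 1)
    (ι : ℕ → KG G → H)
    (hvert : ∀ n, ∀ g : G, ι n (vtx g) = ρ n g (x n))
    (hstraight : ∀ n, StraightOnKG (ι n))
    (hequiv : ∀ n, ∀ g : G, ∀ p : KG G, ι n (leftMulKG g p) = ρ n g (ι n p)) :
    ∃ φ : ℕ → ℕ, StrictMono φ ∧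
      ∃ dbar : KG G → KG G → ℝ,
        (∀ p, dbar p p = 0) ∧ (∀ p q, dbar p q = dbar q p) ∧
        (∀ p q r, dbar p r ≤ dbar p q + dbar q r) ∧
        (∀ p q : KG G,
          Filter.Tendsto
            (fun i => rescaleFactor S hS (ι (φ i)) * dist (ι (φ i) p) (ι (φ i) q))
            Filter.atTop (nhds (dbar p q))) ∧
        ∃ (T : Type u) (_ : MetricSpace T) (qm : KG G → T),
          Function.Surjective qm ∧ (∀ p q', dist (qm p) (qm q') = dbar p q') ∧
          IsRTree T := by
  obtain ⟨α, hα⟩ := hblow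
  exact blowup_gives_rtree_general S hS hgen (fun _ => hthin.fourPointCondition hgeo) ρ x ι hvert
    hstraight (by simpa using (tendsto_rescaleFactor_zero hS hgen hvert hα).mul_const (6 * Δ))
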